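/- Any two terminal Fano polygons in Z^2 (not merely up to unimodular equivalence) are connected by a finite chain of terminal Fano polygons in which each consecutive pair is related by inclusion. -/

import Mathlib

open Set

/-- A lattice point of `ℤ^d ⊆ ℝ^d`. -/
def IsLatticePoint {d : ℕ} (x : Fin d → ℝ) : Prop := ∀ i, ∃ n : ℤ, x i = (n : ℝ)

/-- A lattice polytope: the convex hull of finitely many lattice points. -/
def IsLatticePolytope {d : ℕ} (P : Set (Fin d → ℝ)) : Prop :=
  ∃ S : Finset (Fin d → ℝ), (∀ x ∈ S, IsLatticePoint x) ∧ P = convexHull ℝ (S : Set (Fin d → ℝ))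

/-- The polar dual `P* = {u | ⟨u,v⟩ ≥ -1 for all v ∈ P}`. -/
def polarDual {d : ℕ} (P : Set (Fin d → ℝ)) : Set (Fin d → ℝ) :=
  {u | ∀ v ∈ P, (-1 : ℝ) ≤ ∑ i, u i * v i}

/-- `[P]`: the convex hull of the lattice points of `P`. -/
def latticeHull {d : ℕ} (P : Set (Fin d → ℝ)) : Set (Fin d → ℝ) :=
  convexHull ℝ {x ∈ P | IsLatticePoint x}

/-- A primitive lattice point. -/
def IsPrimitivePt {d : ℕ} (x : Fin d → ℝ) : Prop :=
  IsLatticePoint x ∧ x ≠ 0 ∧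
    ∀ (n : ℕ) (u : Fin d → ℝ), IsLatticePoint u → x = n • u → n = 1

/-- A Fano polytope: a lattice polytope with the origin as interior point,
all of whose vertices are primitive lattice points. -/
def IsFanoPolytope {d : ℕ} (P : Set (Fin d → ℝ)) : Prop :=
  IsLatticePolytope P ∧ 0 ∈ interior P ∧ ∀ v ∈ Set.extremePoints ℝ P, IsPrimitivePt v

/-- Canonical: the origin is the unique interior lattice point. -/
def IsCanonical {d : ℕ} (P : Set (Fin d → ℝ)) : Prop :=
  ∀ x ∈ interior P, IsLatticePoint x → x = 0

/-- Terminal: the lattice points are exactly the vertices together with the origin. -/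
def IsTerminal {d : ℕ} (P : Set (Fin d → ℝ)) : Prop :=
  {x ∈ P | IsLatticePoint x} = Set.extremePoints ℝ P ∪ {0}

/-- A terminal Fano polygon. -/
def IsTerminalFano (P : Set (Fin 2 → ℝ)) : Prop := IsFanoPolytope P ∧ IsTerminal P

open Filter Topology

/-- The determinant of two planar vectors. -/
def planarDet (u v : Fin 2 → ℝ) : ℝ := u 0 * v 1 - u 1 * v 0

/-- A pair of lattice vectors generating `ℤ²`. -/
def IsLatticeBasis (e f : Fin 2 → ℝ) : Prop :=
  IsLatticePoint e ∧ IsLatticePoint f ∧ (planarDet e f = 1 ∨ planarDet e f = -1)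

/-- The square spanned by `±e, ±f`. -/
def squareHull (e f : Fin 2 → ℝ) : Set (Fin 2 → ℝ) := convexHull ℝ {e, -e, f, -f}

/-- The triangle spanned by `e, f, -e-f`. -/
def triangleHull (e f : Fin 2 → ℝ) : Set (Fin 2 → ℝ) := convexHull ℝ {e, f, -e - f}

/-- The hexagon spanned by `±e, ±f, ±(e+f)`. -/
def hexagonHull (e f : Fin 2 → ℝ) : Set (Fin 2 → ℝ) :=
  convexHull ℝ {e, -e, f, -f, e + f, -e - f}

section LatticePoints

variable {d : ℕ} {x y : Fin d → ℝ}

lemma IsLatticePoint.add (hx : IsLatticePoint x) (hy : IsLatticePoint y) :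
    IsLatticePoint (x + y) := fun i => by
  obtain ⟨m, hm⟩ := hx i
  obtain ⟨n, hn⟩ := hy i
  exact ⟨m + n, by simp [hm, hn]⟩

lemma IsLatticePoint.neg (hx : IsLatticePoint x) : IsLatticePoint (-x) := fun i => by
  obtain ⟨m, hm⟩ := hx i
  exact ⟨-m, by simp [hm]⟩

lemma IsLatticePoint.sub (hx : IsLatticePoint x) (hy : IsLatticePoint y) :
    IsLatticePoint (x - y) := sub_eq_add_neg x y ▸ hx.add hy.neg

lemma IsLatticePoint.int_smul (hx : IsLatticePoint x) (n : ℤ) :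
    IsLatticePoint ((n : ℝ) • x) := fun i => by
  obtain ⟨m, hm⟩ := hx i
  exact ⟨n * m, by simp [hm]⟩

lemma IsLatticePoint.exists_planarDet_eq {u v : Fin 2 → ℝ} (hu : IsLatticePoint u)
    (hv : IsLatticePoint v) : ∃ n : ℤ, planarDet u v = n := by
  obtain ⟨a, ha⟩ := hu 0
  obtain ⟨b, hb⟩ := hu 1
  obtain ⟨c, hc⟩ := hv 0
  obtain ⟨d, hd⟩ := hv 1
  exact ⟨a * d - b * c, by simp [planarDet, *]⟩

end LatticePoints

/-- The linear functional `planarDet u`. -/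
def planarDetLeft (u : Fin 2 → ℝ) : (Fin 2 → ℝ) →ₗ[ℝ] ℝ where
  toFun := planarDet u
  map_add' x y := by simp [planarDet]; ring
  map_smul' c x := by simp [planarDet]; ring

lemma planarDet_cramer (u v z : Fin 2 → ℝ) (h : planarDet u v ≠ 0) :
    z = (planarDet z v / planarDet u v) • u + (planarDet u z / planarDet u v) • v := by
  ext i
  simp only [Pi.add_apply, Pi.smul_apply, smul_eq_mul]
  field_simp
  fin_cases i <;> simp [planarDet] <;> ring

namespace IsLatticeBasis

variable {e f : Fin 2 → ℝ}

lemma swap (h : IsLatticeBasis e f) : IsLatticeBasis f e := by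
  refine ⟨h.2.1, h.1, ?_⟩
  have : planarDet f e = -planarDet e f := by simp [planarDet]; ring
  rw [this]
  rcases h.2.2 with h | h <;> simp [h]

lemma neg_left (h : IsLatticeBasis e f) : IsLatticeBasis (-e) f := by
  refine ⟨h.1.neg, h.2.1, ?_⟩
  have : planarDet (-e) f = -planarDet e f := by simp [planarDet]; ring
  rw [this]
  rcases h.2.2 with h | h <;> simp [h]

lemma add_right (h : IsLatticeBasis e f) : IsLatticeBasis e (e + f) := by
  refine ⟨h.1, h.1.add h.2.1, ?_⟩
  have : planarDet e (e + f) = planarDet e f := by simp [planarDet]; ring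
  rw [this]
  exact h.2.2

/-- The dual basis of a lattice basis. -/
lemma exists_coordinates (h : IsLatticeBasis e f) :
    ∃ a b : (Fin 2 → ℝ) →ₗ[ℝ] ℝ, a e = 1 ∧ a f = 0 ∧ b e = 0 ∧ b f = 1 ∧
      (∀ x, x = a x • e + b x • f) ∧
      ∀ x, IsLatticePoint x → (∃ m : ℤ, a x = m) ∧ ∃ n : ℤ, b x = n := by
  have hne : planarDet e f ≠ 0 := by rcases h.2.2 with h | h <;> simp [h]
  have hsq : planarDet e f * planarDet e f = 1 := by rcases h.2.2 with h | h <;> simp [h]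
  have hinv : (planarDet e f)⁻¹ = planarDet e f := by
    rcases h.2.2 with h | h <;> rw [h] <;> norm_num
  have hint : ∃ k : ℤ, planarDet e f = k := h.1.exists_planarDet_eq h.2.1
  refine ⟨(-planarDet e f) • planarDetLeft f, planarDet e f • planarDetLeft e,
    ?_, ?_, ?_, ?_, ?_, ?_⟩
  · change -planarDet e f * planarDet f e = 1
    rw [← hsq]; simp only [planarDet]; ring
  · change -planarDet e f * planarDet f f = 0
    simp only [planarDet]; ring
  · change planarDet e f * planarDet e e = 0
    simp only [planarDet]; ring
  · exact hsq
  · intro x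
    change x = (-planarDet e f * planarDet f x) • e + (planarDet e f * planarDet e x) • f
    have key := planarDet_cramer e f x hne
    have hswap : planarDet x f = -planarDet f x := by simp [planarDet]; ring
    rw [div_eq_mul_inv, div_eq_mul_inv, hinv, hswap] at key
    convert key using 3 <;> ring
  · intro x hx
    obtain ⟨k, hk⟩ := hint
    obtain ⟨m, hm⟩ := h.2.1.exists_planarDet_eq hx
    obtain ⟨n, hn⟩ := h.1.exists_planarDet_eq hx
    refine ⟨⟨-k * m, ?_⟩, ⟨k * n, ?_⟩⟩
    · change -planarDet e f * planarDet f x = _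
      rw [hk, hm]; push_cast; ring
    · change planarDet e f * planarDet e x = _
      rw [hk, hn]; push_cast; ring

end IsLatticeBasis

section Criteria

/-- A hull of finitely many nonzero lattice points is a terminal Fano polygon once all these points
are vertices and there are no further nonzero lattice points. -/
lemma isTerminalFano_convexHull {S : Set (Fin 2 → ℝ)} (hfin : S.Finite)
    (hlat : ∀ v ∈ S, IsLatticePoint v) (h0 : (0 : Fin 2 → ℝ) ∉ S)
    (hint : 0 ∈ interior (convexHull ℝ S))
    (hpts : ∀ x ∈ convexHull ℝ S, IsLatticePoint x → x ∈ S ∨ x = 0)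
    (hext : ∀ v ∈ S, v ∈ extremePoints ℝ (convexHull ℝ S)) :
    IsTerminalFano (convexHull ℝ S) := by
  have hmem0 : (0 : Fin 2 → ℝ) ∈ convexHull ℝ S := interior_subset hint
  refine ⟨⟨⟨hfin.toFinset, by simpa using hlat, by simp⟩, hint, ?_⟩, ?_⟩
  · intro v hv
    have hvS : v ∈ S := extremePoints_convexHull_subset hv
    have hv0 : v ≠ 0 := fun h => h0 (h ▸ hvS)
    refine ⟨hlat v hvS, hv0, ?_⟩
    intro n u hu hvu
    by_contra hn
    have hn0 : n ≠ 0 := by rintro rfl; simp at hvu; exact hv0 hvu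
    have hn2 : (2 : ℝ) ≤ n := by exact_mod_cast (by omega : 2 ≤ n)
    have huv : u = (n : ℝ)⁻¹ • v := by
      rw [hvu, ← Nat.cast_smul_eq_nsmul ℝ, smul_smul, inv_mul_cancel₀ (by positivity), one_smul]
    have hseg : u ∈ openSegment ℝ 0 v := by
      refine ⟨1 - (n : ℝ)⁻¹, (n : ℝ)⁻¹, ?_, by positivity, by ring, by simp [huv]⟩
      have : (n : ℝ)⁻¹ < 1 := inv_lt_one_of_one_lt₀ (by linarith)
      linarith
    have huP : u ∈ convexHull ℝ S :=
      (convex_convexHull ℝ S).openSegment_subset hmem0 hv.1 hseg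
    rcases hpts u huP hu with huS | hu0
    · have := (mem_extremePoints.1 (hext u huS)).2 0 hmem0 v hv.1 hseg
      exact h0 (this.1 ▸ huS)
    · rw [hu0] at hvu; simp at hvu; exact hv0 hvu
  · ext x
    constructor
    · rintro ⟨hx, hxl⟩
      rcases hpts x hx hxl with h | h
      · exact Or.inl (hext x h)
      · exact Or.inr h
    · rintro (hx | hx)
      · exact ⟨hx.1, hlat x (extremePoints_convexHull_subset hx)⟩
      · rw [mem_singleton_iff] at hx
        subst hx
        exact ⟨hmem0, fun i => ⟨0, by simp⟩⟩

/-- A common maximizer of two functionals that jointly separate points is an extreme point. -/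
lemma mem_extremePoints_of_two_facets {E : Type*} [AddCommGroup E] [Module ℝ E] {P : Set E}
    {v : E} (hv : v ∈ P) (l₁ l₂ : E →ₗ[ℝ] ℝ) (h₁ : ∀ x ∈ P, l₁ x ≤ l₁ v)
    (h₂ : ∀ x ∈ P, l₂ x ≤ l₂ v) (hsep : ∀ x, l₁ x = l₁ v → l₂ x = l₂ v → x = v) :
    v ∈ extremePoints ℝ P := by
  have aux : ∀ l : E →ₗ[ℝ] ℝ, (∀ x ∈ P, l x ≤ l v) → ∀ x ∈ P, ∀ y ∈ P,
      v ∈ openSegment ℝ x y → l x = l v := by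
    rintro l hl x hx y hy ⟨s, t, hs, ht, hst, hxy⟩
    have h : s * l x + t * l y = l v := by rw [← hxy]; simp
    have hx' := hl x hx
    have hy' := hl y hy
    refine le_antisymm hx' ?_
    by_contra hlt
    have : s * l x + t * l y < s * l v + t * l v :=
      add_lt_add_of_lt_of_le (by gcongr; exact not_le.1 hlt) (by gcongr)
    rw [← add_mul, hst, one_mul] at this
    linarith
  refine ⟨hv, fun x hx y hy hxy => ?_⟩
  exact hsep x (aux l₁ h₁ x hx y hy hxy) (aux l₂ h₂ x hx y hy hxy)

lemma le_of_mem_convexHull {E : Type*} [AddCommGroup E] [Module ℝ E] {S : Set E}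
    (l : E →ₗ[ℝ] ℝ) {c : ℝ} (h : ∀ v ∈ S, l v ≤ c) {x : E} (hx : x ∈ convexHull ℝ S) :
    l x ≤ c :=
  convexHull_min (t := {x | l x ≤ c}) h (convex_halfSpace_le l.isLinear c) hx

end Criteria

namespace IsLatticeBasis

variable {e f : Fin 2 → ℝ}

lemma zero_mem_interior_squareHull (h : IsLatticeBasis e f) : 0 ∈ interior (squareHull e f) := by
  obtain ⟨a, b, -, -, -, -, hx, -⟩ := h.exists_coordinates
  have ha : Continuous a := a.continuous_of_finiteDimensional
  have hb : Continuous b := b.continuous_of_finiteDimensional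
  rw [mem_interior]
  refine ⟨{x | |a x| < 1 / 2} ∩ {x | |b x| < 1 / 2}, ?_,
    (isOpen_lt (by fun_prop) (by fun_prop)).inter (isOpen_lt (by fun_prop) (by fun_prop)),
    by simp⟩
  rintro x ⟨hax, hbx⟩
  have hax := abs_lt.1 (mem_ofPred.1 hax)
  have hbx := abs_lt.1 (mem_ofPred.1 hbx)
  have hcomb : x = ∑ i : Fin 4, ![1 / 4 + a x / 2, 1 / 4 - a x / 2, 1 / 4 + b x / 2,
      1 / 4 - b x / 2] i • ![e, -e, f, -f] i := by
    conv_lhs => rw [hx x]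
    simp [Fin.sum_univ_four]
    module
  rw [hcomb]
  refine (convex_convexHull ℝ _).sum_mem ?_ ?_ ?_
  · intro i _
    fin_cases i <;> simp <;> linarith
  · simp [Fin.sum_univ_four]; ring
  · intro i _
    apply subset_convexHull
    fin_cases i <;> simp

lemma zero_mem_interior_triangleHull (h : IsLatticeBasis e f) :
    0 ∈ interior (triangleHull e f) := by
  obtain ⟨a, b, -, -, -, -, hx, -⟩ := h.exists_coordinates
  have ha : Continuous a := a.continuous_of_finiteDimensional
  have hb : Continuous b := b.continuous_of_finiteDimensional
  rw [mem_interior]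
  refine ⟨{x | |a x| < 1 / 9} ∩ {x | |b x| < 1 / 9}, ?_,
    (isOpen_lt (by fun_prop) (by fun_prop)).inter (isOpen_lt (by fun_prop) (by fun_prop)),
    by simp⟩
  rintro x ⟨hax, hbx⟩
  have hax := abs_lt.1 (mem_ofPred.1 hax)
  have hbx := abs_lt.1 (mem_ofPred.1 hbx)
  have hcomb : x = ∑ i : Fin 3, ![a x + (1 - a x - b x) / 3, b x + (1 - a x - b x) / 3,
      (1 - a x - b x) / 3] i • ![e, f, -e - f] i := by
    conv_lhs => rw [hx x]
    simp [Fin.sum_univ_three]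
    module
  rw [hcomb]
  refine (convex_convexHull ℝ _).sum_mem ?_ ?_ ?_
  · intro i _
    fin_cases i <;> simp <;> linarith
  · simp [Fin.sum_univ_three]; ring
  · intro i _
    apply subset_convexHull
    fin_cases i <;> simp

lemma squareHull_subset_hexagonHull (e f : Fin 2 → ℝ) : squareHull e f ⊆ hexagonHull e f := by
  apply convexHull_mono
  rintro x (rfl | rfl | rfl | rfl) <;> simp

lemma triangleHull_subset_hexagonHull (e f : Fin 2 → ℝ) :
    triangleHull e f ⊆ hexagonHull e f := by
  apply convexHull_mono
  rintro x (rfl | rfl | rfl) <;> simp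

lemma squareHull_add_subset_hexagonHull (e f : Fin 2 → ℝ) :
    squareHull e (e + f) ⊆ hexagonHull e f := by
  apply convexHull_mono
  rintro x (rfl | rfl | rfl | rfl) <;> simp [sub_eq_add_neg, add_comm]

lemma isTerminalFano_squareHull (h : IsLatticeBasis e f) : IsTerminalFano (squareHull e f) := by
  have hint := h.zero_mem_interior_squareHull
  obtain ⟨a, b, hae, haf, hbe, hbf, hx, hl⟩ := h.exists_coordinates
  have hext : ∀ x y, a x = a y → b x = b y → x = y := fun x y h₁ h₂ => by
    rw [hx x, hx y, h₁, h₂]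
  have ineq : ∀ x ∈ convexHull ℝ {e, -e, f, -f},
      (a + b) x ≤ 1 ∧ (a - b) x ≤ 1 ∧ (-a + b) x ≤ 1 ∧ (-a - b) x ≤ 1 := by
    intro x hx
    refine ⟨?_, ?_, ?_, ?_⟩ <;> refine le_of_mem_convexHull _ ?_ hx <;>
      rintro v (rfl | rfl | rfl | rfl) <;> norm_num [hae, haf, hbe, hbf]
  refine isTerminalFano_convexHull (toFinite _) ?_ ?_ hint ?_ ?_
  · rintro v (rfl | rfl | rfl | rfl)
    exacts [h.1, h.1.neg, h.2.1, h.2.1.neg]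
  · rintro (h | h | h | h) <;> [have := congrArg a h; have := congrArg a h;
      have := congrArg b h; have := congrArg b h] <;> simp [hae, hbf] at this
  · intro x hxP hxl
    obtain ⟨⟨m, hm⟩, n, hn⟩ := hl x hxl
    have hineq := ineq x hxP
    simp only [LinearMap.add_apply, LinearMap.sub_apply, LinearMap.neg_apply, hm, hn] at hineq
    norm_cast at hineq
    have hcases : (m = 1 ∧ n = 0) ∨ (m = -1 ∧ n = 0) ∨ (m = 0 ∧ n = 1) ∨ (m = 0 ∧ n = -1) ∨
        (m = 0 ∧ n = 0) := by omega
    rw [hx x, hm, hn]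
    rcases hcases with h | h | h | h | h <;> rw [h.1, h.2] <;> simp
  · intro v hvS
    have hvP := subset_convexHull ℝ _ hvS
    rcases hvS with rfl | rfl | rfl | rfl <;>
      [refine mem_extremePoints_of_two_facets hvP (a + b) (a - b) ?_ ?_ ?_;
       refine mem_extremePoints_of_two_facets hvP (-a + b) (-a - b) ?_ ?_ ?_;
       refine mem_extremePoints_of_two_facets hvP (a + b) (-a + b) ?_ ?_ ?_;
       refine mem_extremePoints_of_two_facets hvP (a - b) (-a - b) ?_ ?_ ?_]
    all_goals
      simp only [LinearMap.add_apply, LinearMap.sub_apply, LinearMap.neg_apply, map_neg,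
        hae, haf, hbe, hbf] at ineq ⊢
      first
      | intro x hxP
        have := ineq x hxP
        linarith
      | intro x h₁ h₂
        apply hext <;> simp only [map_neg, hae, haf, hbe, hbf] <;> linarith

lemma isTerminalFano_triangleHull (h : IsLatticeBasis e f) :
    IsTerminalFano (triangleHull e f) := by
  have hint := h.zero_mem_interior_triangleHull
  obtain ⟨a, b, hae, haf, hbe, hbf, hx, hl⟩ := h.exists_coordinates
  have hext : ∀ x y, a x = a y → b x = b y → x = y := fun x y h₁ h₂ => by
    rw [hx x, hx y, h₁, h₂]
  have ineq : ∀ x ∈ convexHull ℝ {e, f, -e - f},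
      (a + b) x ≤ 1 ∧ (a - b - b) x ≤ 1 ∧ (b - a - a) x ≤ 1 := by
    intro x hx
    refine ⟨?_, ?_, ?_⟩ <;> refine le_of_mem_convexHull _ ?_ hx <;>
      rintro v (rfl | rfl | rfl) <;> norm_num [hae, haf, hbe, hbf]
  refine isTerminalFano_convexHull (toFinite _) ?_ ?_ hint ?_ ?_
  · rintro v (rfl | rfl | rfl)
    exacts [h.1, h.2.1, h.1.neg.sub h.2.1]
  · rintro (h | h | h) <;> [have := congrArg a h; have := congrArg b h;
      have := congrArg a h] <;> simp [hae, hbf, haf] at this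
  · intro x hxP hxl
    obtain ⟨⟨m, hm⟩, n, hn⟩ := hl x hxl
    have hineq := ineq x hxP
    simp only [LinearMap.add_apply, LinearMap.sub_apply, hm, hn] at hineq
    norm_cast at hineq
    have hcases : (m = 1 ∧ n = 0) ∨ (m = 0 ∧ n = 1) ∨ (m = -1 ∧ n = -1) ∨
        (m = 0 ∧ n = 0) := by omega
    rw [hx x, hm, hn]
    rcases hcases with h | h | h | h <;> rw [h.1, h.2] <;> simp [sub_eq_add_neg]
  · intro v hvS
    have hvP := subset_convexHull ℝ _ hvS
    rcases hvS with rfl | rfl | rfl <;>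
      [refine mem_extremePoints_of_two_facets hvP (a + b) (a - b - b) ?_ ?_ ?_;
       refine mem_extremePoints_of_two_facets hvP (a + b) (b - a - a) ?_ ?_ ?_;
       refine mem_extremePoints_of_two_facets hvP (a - b - b) (b - a - a) ?_ ?_ ?_]
    all_goals
      simp only [LinearMap.add_apply, LinearMap.sub_apply, map_neg, map_sub,
        hae, haf, hbe, hbf] at ineq ⊢
      first
      | intro x hxP
        have := ineq x hxP
        linarith
      | intro x h₁ h₂
        apply hext <;> simp only [map_neg, map_sub, hae, haf, hbe, hbf] <;> linarith

lemma isTerminalFano_hexagonHull (h : IsLatticeBasis e f) :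
    IsTerminalFano (hexagonHull e f) := by
  have hint : 0 ∈ interior (hexagonHull e f) :=
    interior_mono (squareHull_subset_hexagonHull e f) h.zero_mem_interior_squareHull
  obtain ⟨a, b, hae, haf, hbe, hbf, hx, hl⟩ := h.exists_coordinates
  have hext : ∀ x y, a x = a y → b x = b y → x = y := fun x y h₁ h₂ => by
    rw [hx x, hx y, h₁, h₂]
  have ineq : ∀ x ∈ convexHull ℝ {e, -e, f, -f, e + f, -e - f},
      a x ≤ 1 ∧ b x ≤ 1 ∧ (-a) x ≤ 1 ∧ (-b) x ≤ 1 ∧ (a - b) x ≤ 1 ∧ (b - a) x ≤ 1 := by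
    intro x hx
    refine ⟨?_, ?_, ?_, ?_, ?_, ?_⟩ <;> refine le_of_mem_convexHull _ ?_ hx <;>
      rintro v (rfl | rfl | rfl | rfl | rfl | rfl) <;> norm_num [hae, haf, hbe, hbf]
  refine isTerminalFano_convexHull (toFinite _) ?_ ?_ hint ?_ ?_
  · rintro v (rfl | rfl | rfl | rfl | rfl | rfl)
    exacts [h.1, h.1.neg, h.2.1, h.2.1.neg, h.1.add h.2.1, h.1.neg.sub h.2.1]
  · rintro (h | h | h | h | h | h) <;> [have := congrArg a h; have := congrArg a h;
      have := congrArg b h; have := congrArg b h; have := congrArg a h;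
      have := congrArg a h] <;> simp [hae, hbf, haf] at this
  · intro x hxP hxl
    obtain ⟨⟨m, hm⟩, n, hn⟩ := hl x hxl
    have hineq := ineq x hxP
    simp only [LinearMap.neg_apply, LinearMap.sub_apply, hm, hn] at hineq
    norm_cast at hineq
    have hcases : (m = 1 ∧ n = 0) ∨ (m = -1 ∧ n = 0) ∨ (m = 0 ∧ n = 1) ∨ (m = 0 ∧ n = -1) ∨
        (m = 1 ∧ n = 1) ∨ (m = -1 ∧ n = -1) ∨ (m = 0 ∧ n = 0) := by omega
    rw [hx x, hm, hn]
    rcases hcases with h | h | h | h | h | h | h <;> rw [h.1, h.2] <;> simp [sub_eq_add_neg]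
  · intro v hvS
    have hvP := subset_convexHull ℝ _ hvS
    rcases hvS with rfl | rfl | rfl | rfl | rfl | rfl <;>
      [refine mem_extremePoints_of_two_facets hvP a (a - b) ?_ ?_ ?_;
       refine mem_extremePoints_of_two_facets hvP (-a) (b - a) ?_ ?_ ?_;
       refine mem_extremePoints_of_two_facets hvP b (b - a) ?_ ?_ ?_;
       refine mem_extremePoints_of_two_facets hvP (-b) (a - b) ?_ ?_ ?_;
       refine mem_extremePoints_of_two_facets hvP a b ?_ ?_ ?_;
       refine mem_extremePoints_of_two_facets hvP (-a) (-b) ?_ ?_ ?_]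
    all_goals
      simp only [LinearMap.neg_apply, LinearMap.sub_apply, map_neg, map_sub, map_add,
        hae, haf, hbe, hbf] at ineq ⊢
      first
      | intro x hxP
        have := ineq x hxP
        linarith
      | intro x h₁ h₂
        apply hext <;> simp only [map_neg, map_sub, map_add, hae, haf, hbe, hbf] <;> linarith

end IsLatticeBasis

section Connectedness

/-- Two terminal Fano polygons one of which contains the other. -/
def FanoAdj (P Q : Set (Fin 2 → ℝ)) : Prop :=
  IsTerminalFano P ∧ IsTerminalFano Q ∧ (P ⊆ Q ∨ Q ⊆ P)

/-- Being joined by a chain of inclusions of terminal Fano polygons. -/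
def FanoConnected : Set (Fin 2 → ℝ) → Set (Fin 2 → ℝ) → Prop := Relation.ReflTransGen FanoAdj

lemma FanoConnected.symm {P Q : Set (Fin 2 → ℝ)} (h : FanoConnected P Q) : FanoConnected Q P := by
  have : Std.Symm FanoAdj := ⟨fun _ _ h => ⟨h.2.1, h.1, h.2.2.symm⟩⟩
  exact Relation.ReflTransGen.stdSymm.symm _ _ h

lemma FanoConnected.trans {P Q R : Set (Fin 2 → ℝ)} (h : FanoConnected P Q)
    (h' : FanoConnected Q R) : FanoConnected P R :=
  Relation.ReflTransGen.trans h h'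

lemma FanoConnected.of_subset {P Q : Set (Fin 2 → ℝ)} (hP : IsTerminalFano P)
    (hQ : IsTerminalFano Q) (h : P ⊆ Q) : FanoConnected P Q :=
  Relation.ReflTransGen.single ⟨hP, hQ, Or.inl h⟩

lemma FanoConnected.exists_chain {P Q : Set (Fin 2 → ℝ)} (hQ : IsTerminalFano Q)
    (h : FanoConnected P Q) :
    ∃ (k : ℕ) (c : ℕ → Set (Fin 2 → ℝ)), c 0 = P ∧ c k = Q ∧
      (∀ i ≤ k, IsTerminalFano (c i)) ∧
      ∀ i < k, c i ⊆ c (i+1) ∨ c (i+1) ⊆ c i := by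
  induction h using Relation.ReflTransGen.head_induction_on with
  | refl => exact ⟨0, fun _ => Q, rfl, rfl, fun _ _ => hQ, by simp⟩
  | @head P R hPR _ ih =>
    obtain ⟨k, c, h0, hk, hF, hadj⟩ := ih
    refine ⟨k + 1, fun i => Nat.casesOn i P c, rfl, hk, ?_, ?_⟩
    · rintro (_ | i) hi
      · exact hPR.1
      · exact hF i (by omega)
    · rintro (_ | i) hi
      · simpa [h0] using hPR.2.2
      · exact hadj i (by omega)

/-- The square only depends on the unordered pair. -/
lemma squareHull_swap (e f : Fin 2 → ℝ) : squareHull e f = squareHull f e := by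
  unfold squareHull
  congr 1
  ext x
  simp only [mem_insert_iff, mem_singleton_iff]
  tauto

lemma squareHull_neg_left (e f : Fin 2 → ℝ) : squareHull (-e) f = squareHull e f := by
  unfold squareHull
  congr 1
  ext x
  simp only [mem_insert_iff, mem_singleton_iff, neg_neg]
  tauto

lemma IsLatticeBasis.fanoConnected_shear {e f : Fin 2 → ℝ} (h : IsLatticeBasis e f) :
    FanoConnected (squareHull e f) (squareHull e (e + f)) :=
  (FanoConnected.of_subset h.isTerminalFano_squareHull h.isTerminalFano_hexagonHull
    (IsLatticeBasis.squareHull_subset_hexagonHull e f)).trans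
  (FanoConnected.of_subset h.add_right.isTerminalFano_squareHull h.isTerminalFano_hexagonHull
    (IsLatticeBasis.squareHull_add_subset_hexagonHull e f)).symm

open Matrix in
/-- A column of an integral matrix as a real vector. -/
def realColumn (M : SpecialLinearGroup (Fin 2) ℤ) (j : Fin 2) : Fin 2 → ℝ :=
  fun i => (M.1 i j : ℝ)

open Matrix in
lemma isLatticeBasis_realColumn (M : SpecialLinearGroup (Fin 2) ℤ) :
    IsLatticeBasis (realColumn M 0) (realColumn M 1) := by
  refine ⟨fun i => ⟨_, rfl⟩, fun i => ⟨_, rfl⟩, Or.inl ?_⟩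
  have h := M.2
  rw [det_fin_two] at h
  simp only [planarDet, realColumn]
  rw [mul_comm ((M.1 1 0 : ℤ) : ℝ)]
  exact_mod_cast h

open Matrix in
lemma fanoConnected_square_realColumn (M : SpecialLinearGroup (Fin 2) ℤ) :
    FanoConnected (squareHull (realColumn 1 0) (realColumn 1 1))
      (squareHull (realColumn M 0) (realColumn M 1)) := by
  have hS : ∀ N : SpecialLinearGroup (Fin 2) ℤ,
      squareHull (realColumn (N * ModularGroup.S) 0) (realColumn (N * ModularGroup.S) 1) =
        squareHull (realColumn N 0) (realColumn N 1) := by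
    intro N
    have h0 : realColumn (N * ModularGroup.S) 0 = realColumn N 1 := by
      ext i
      simp [realColumn, ModularGroup.coe_S, Matrix.mul_apply, Fin.sum_univ_two]
    have h1 : realColumn (N * ModularGroup.S) 1 = -realColumn N 0 := by
      ext i
      simp [realColumn, ModularGroup.coe_S, Matrix.mul_apply, Fin.sum_univ_two]
    rw [h0, h1, squareHull_swap, squareHull_neg_left]
  have hT : ∀ N : SpecialLinearGroup (Fin 2) ℤ,
      FanoConnected (squareHull (realColumn N 0) (realColumn N 1))
        (squareHull (realColumn (N * ModularGroup.T) 0)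
          (realColumn (N * ModularGroup.T) 1)) := by
    intro N
    have h0 : realColumn (N * ModularGroup.T) 0 = realColumn N 0 := by
      ext i
      simp [realColumn, ModularGroup.coe_T, Matrix.mul_apply, Fin.sum_univ_two]
    have h1 : realColumn (N * ModularGroup.T) 1 = realColumn N 0 + realColumn N 1 := by
      ext i
      simp [realColumn, ModularGroup.coe_T, Matrix.mul_apply, Fin.sum_univ_two]
    rw [h0, h1]
    exact (isLatticeBasis_realColumn N).fanoConnected_shear
  have hM : M ∈ Subgroup.closure {ModularGroup.S, ModularGroup.T} := by
    rw [SpecialLinearGroup.SL2Z_generators]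
    trivial
  induction hM using Subgroup.closure_induction_right with
  | one => exact Relation.ReflTransGen.refl
  | mul_right N _ y hy ih =>
    rcases hy with rfl | rfl
    · rwa [hS]
    · exact ih.trans (hT N)
  | mul_inv_cancel N _ y hy ih =>
    rcases hy with rfl | rfl
    · rwa [← hS (N * _), inv_mul_cancel_right]
    · refine ih.trans (FanoConnected.symm ?_)
      simpa using hT (N * ModularGroup.T⁻¹)

open Matrix in
lemma IsLatticeBasis.fanoConnected_standard {e f : Fin 2 → ℝ} (h : IsLatticeBasis e f) :
    FanoConnected (squareHull (realColumn 1 0) (realColumn 1 1)) (squareHull e f) := by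
  have aux : ∀ e f : Fin 2 → ℝ, IsLatticePoint e → IsLatticePoint f → planarDet e f = 1 →
      FanoConnected (squareHull (realColumn 1 0) (realColumn 1 1)) (squareHull e f) := by
    intro e f he hf hdet
    choose p hp using he
    choose q hq using hf
    have hdet' : (!![p 0, q 0; p 1, q 1] : Matrix (Fin 2) (Fin 2) ℤ).det = 1 := by
      rw [det_fin_two_of]
      simp only [planarDet, hp, hq] at hdet
      have : p 0 * q 1 - p 1 * q 0 = 1 := by exact_mod_cast hdet
      linarith
    have key := fanoConnected_square_realColumn ⟨_, hdet'⟩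
    convert key using 2
    · ext i; fin_cases i <;> simp [realColumn, hp]
    · ext i; fin_cases i <;> simp [realColumn, hq]
  rcases h.2.2 with hdet | hdet
  · exact aux e f h.1 h.2.1 hdet
  · rw [← squareHull_neg_left e]
    refine aux (-e) f h.1.neg h.2.1 ?_
    have : planarDet (-e) f = -planarDet e f := by simp [planarDet]; ring
    rw [this, hdet, neg_neg]

lemma IsLatticeBasis.fanoConnected_triangle {e f : Fin 2 → ℝ} (h : IsLatticeBasis e f) :
    FanoConnected (triangleHull e f) (squareHull e f) :=
  (FanoConnected.of_subset h.isTerminalFano_triangleHull h.isTerminalFano_hexagonHull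
    (IsLatticeBasis.triangleHull_subset_hexagonHull e f)).trans
  (FanoConnected.of_subset h.isTerminalFano_squareHull h.isTerminalFano_hexagonHull
    (IsLatticeBasis.squareHull_subset_hexagonHull e f)).symm

end Connectedness

namespace IsTerminalFano

variable {P : Set (Fin 2 → ℝ)}

lemma convex (hP : IsTerminalFano P) : Convex ℝ P := by
  obtain ⟨S, -, rfl⟩ := hP.1.1
  exact convex_convexHull ℝ _

lemma zero_mem (hP : IsTerminalFano P) : 0 ∈ P := interior_subset hP.1.2.1

/-- The triangle with vertices `0, x, y` lies in `P` as soon as `x` and `y` do. -/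
lemma combo_mem (hP : IsTerminalFano P) {x y : Fin 2 → ℝ} (hx : x ∈ P) (hy : y ∈ P) {s t : ℝ}
    (hs : 0 ≤ s) (ht : 0 ≤ t) (hst : s + t ≤ 1) : s • x + t • y ∈ P := by
  have hmem := hP.convex.sum_mem (t := Finset.univ) (w := ![s, t, 1 - s - t]) (z := ![x, y, 0])
    (by intro i _; fin_cases i <;> simp <;> linarith) (by simp [Fin.sum_univ_three])
    (by intro i _; fin_cases i <;> simp [hx, hy, hP.zero_mem])
  simpa [Fin.sum_univ_three] using hmem

/-- A nonzero lattice point of a triangle `0, x, y` in `P` is one of its vertices. -/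
lemma eq_or_eq_of_combo (hP : IsTerminalFano P) {x y z : Fin 2 → ℝ} (hx : x ∈ P) (hy : y ∈ P)
    {s t : ℝ} (hs : 0 ≤ s) (ht : 0 ≤ t) (hst : s + t ≤ 1) (hz : z = s • x + t • y)
    (hzl : IsLatticePoint z) (hz0 : z ≠ 0) : z = x ∨ z = y := by
  have hzP : z ∈ P := hz ▸ hP.combo_mem hx hy hs ht hst
  have hzext : z ∈ extremePoints ℝ P := by
    have : z ∈ extremePoints ℝ P ∪ {0} := hP.2 ▸ ⟨hzP, hzl⟩
    exact this.resolve_right hz0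
  have hext := (mem_extremePoints.1 hzext).2
  rcases hs.eq_or_lt with rfl | hs0
  · rcases (show t ≤ 1 by linarith).eq_or_lt with rfl | ht1
    · right; simp [hz]
    · rcases ht.eq_or_lt with rfl | ht0
      · simp at hz; exact absurd hz hz0
      · exact absurd (hext 0 hP.zero_mem y hy
          ⟨1 - t, t, by linarith, ht0, by ring, by simp [hz]⟩).1.symm hz0
  · left
    rcases (show s ≤ 1 by linarith).eq_or_lt with rfl | hs1
    · have : t = 0 := by linarith
      simp [hz, this]
    · have hs' : 0 < 1 - s := by linarith
      have hy' : (t / (1 - s)) • y ∈ P := by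
        have := hP.combo_mem hy hy (s := t / (1 - s)) (t := 0) (by positivity) le_rfl
          (by rw [add_zero, div_le_one hs']; linarith)
        simpa using this
      refine (hext x hx _ hy' ⟨s, 1 - s, hs0, hs', by ring, ?_⟩).1.symm
      rw [hz, smul_smul, mul_div_cancel₀ _ hs'.ne']

/-- Every nonzero functional is negative at some lattice point of `P`. -/
lemma exists_neg (hP : IsTerminalFano P) (l : (Fin 2 → ℝ) →ₗ[ℝ] ℝ) {w : Fin 2 → ℝ}
    (hw : l w ≠ 0) : ∃ v ∈ P, IsLatticePoint v ∧ l v < 0 := by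
  by_contra! hcon
  obtain ⟨S, hS, hPS⟩ := hP.1.1
  have hpos : ∀ x ∈ P, (-l) x ≤ 0 := by
    intro x hx
    rw [hPS] at hx
    refine le_of_mem_convexHull _ (fun v hv => ?_) hx
    have := hcon v (hPS ▸ subset_convexHull ℝ _ hv) (hS v hv)
    simpa using this
  have hlim : Tendsto (fun t : ℝ => (-t * l w) • w) (𝓝 0) (𝓝 0) := by
    have : Continuous fun t : ℝ => (-t * l w) • w := by fun_prop
    simpa using this.tendsto 0
  have hev : ∀ᶠ t in 𝓝[>] (0 : ℝ), (-t * l w) • w ∈ P :=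
    (hlim.eventually (mem_interior_iff_mem_nhds.1 hP.1.2.1)).filter_mono nhdsWithin_le_nhds
  obtain ⟨t, htP, ht⟩ := (hev.and self_mem_nhdsWithin).exists
  have := hpos _ htP
  simp only [LinearMap.neg_apply, map_smul, smul_eq_mul] at this
  have : 0 < t * (l w * l w) := mul_pos ht (mul_self_pos.2 hw)
  linarith

/-- The lattice points of `P` contain a lattice basis: take a pair with minimal nonzero
determinant. -/
lemma exists_isLatticeBasis (hP : IsTerminalFano P) :
    ∃ e ∈ P, ∃ f ∈ P, IsLatticeBasis e f := by
  classical
  have hex : ∃ n : ℕ, 0 < n ∧ ∃ u ∈ P, ∃ v ∈ P, IsLatticePoint u ∧ IsLatticePoint v ∧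
      |planarDet u v| = n := by
    obtain ⟨u, huP, hul, hu⟩ := hP.exists_neg (LinearMap.proj 0) (w := ![1, 0]) (by simp)
    simp only [LinearMap.proj_apply] at hu
    obtain ⟨v, hvP, hvl, hv⟩ := hP.exists_neg (planarDetLeft u) (w := ![0, 1])
      (by simpa [planarDetLeft, planarDet] using hu.ne)
    change planarDet u v < 0 at hv
    obtain ⟨n, hn⟩ := hul.exists_planarDet_eq hvl
    refine ⟨n.natAbs, ?_, u, huP, v, hvP, hul, hvl, by rw [hn, Nat.cast_natAbs, Int.cast_abs]⟩
    rw [hn] at hv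
    have : n < 0 := by exact_mod_cast hv
    omega
  obtain ⟨hn0, u, huP, v, hvP, hul, hvl, hdet⟩ := Nat.find_spec hex
  set n := Nat.find hex
  have hnR : (0 : ℝ) < n := by exact_mod_cast hn0
  have hdet0 : planarDet u v ≠ 0 := by
    intro h0
    rw [h0, abs_zero] at hdet
    exact hnR.ne hdet
  have hmin : ∀ x ∈ P, ∀ y ∈ P, IsLatticePoint x → IsLatticePoint y → |planarDet x y| < n →
      planarDet x y = 0 := by
    intro x hx y hy hxl hyl hlt
    obtain ⟨m, hm⟩ := hxl.exists_planarDet_eq hyl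
    by_contra hne
    rw [hm] at hne hlt
    have hm0 : m ≠ 0 := by exact_mod_cast hne
    have habs : |(m : ℝ)| = (m.natAbs : ℝ) := by rw [Nat.cast_natAbs, Int.cast_abs]
    rw [habs] at hlt
    exact Nat.find_min hex (by exact_mod_cast hlt)
      ⟨by omega, x, hx, y, hy, hxl, hyl, by rw [hm, habs]⟩
  have hempty : ∀ a b : ℝ, 0 ≤ a → a < 1 → 0 ≤ b → b < 1 → a + b ≤ 1 →
      IsLatticePoint (a • u + b • v) → a = 0 ∧ b = 0 := by
    intro a b ha ha1 hb hb1 hab hl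
    have hzP := hP.combo_mem huP hvP ha hb hab
    have h1 : planarDet (a • u + b • v) v = a * planarDet u v := by
      simp [planarDet]; ring
    have h2 : planarDet u (a • u + b • v) = b * planarDet u v := by
      simp [planarDet]; ring
    have k1 := hmin _ hzP v hvP hl hvl (by
      rw [h1, abs_mul, hdet, abs_of_nonneg ha]; nlinarith)
    have k2 := hmin u huP _ hzP hul hl (by
      rw [h2, abs_mul, hdet, abs_of_nonneg hb]; nlinarith)
    rw [h1] at k1
    rw [h2] at k2
    exact ⟨(mul_eq_zero.1 k1).resolve_right hdet0, (mul_eq_zero.1 k2).resolve_right hdet0⟩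
  have hspan : ∀ z, IsLatticePoint z → ∃ p q : ℤ, z = (p : ℝ) • u + (q : ℝ) • v := by
    intro z hz
    have hcr := planarDet_cramer u v z hdet0
    set a := planarDet z v / planarDet u v
    set b := planarDet u z / planarDet u v
    have hfl : IsLatticePoint (Int.fract a • u + Int.fract b • v) := by
      have : Int.fract a • u + Int.fract b • v = z - (⌊a⌋ : ℝ) • u - (⌊b⌋ : ℝ) • v := by
        rw [hcr, Int.fract, Int.fract]; module
      rw [this]
      exact (hz.sub (hul.int_smul _)).sub (hvl.int_smul _)
    have ha0 := Int.fract_nonneg a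
    have ha1 := Int.fract_lt_one a
    have hb0 := Int.fract_nonneg b
    have hb1 := Int.fract_lt_one b
    have hzero : Int.fract a = 0 ∧ Int.fract b = 0 := by
      rcases le_or_gt (Int.fract a + Int.fract b) 1 with h | h
      · exact hempty _ _ ha0 ha1 hb0 hb1 h hfl
      · have hl' : IsLatticePoint ((1 - Int.fract a) • u + (1 - Int.fract b) • v) := by
          have : (1 - Int.fract a) • u + (1 - Int.fract b) • v =
              u + v - (Int.fract a • u + Int.fract b • v) := by module
          rw [this]
          exact (hul.add hvl).sub hfl
        have := hempty _ _ (by linarith) (by linarith) (by linarith) (by linarith)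
          (by linarith) hl'
        linarith [this.1]
    refine ⟨⌊a⌋, ⌊b⌋, ?_⟩
    conv_lhs => rw [hcr, ← Int.floor_add_fract a, ← Int.floor_add_fract b, hzero.1, hzero.2]
    simp
  refine ⟨u, huP, v, hvP, hul, hvl, ?_⟩
  obtain ⟨p, q, hpq⟩ := hspan ![1, 0] (fun i => by
    fin_cases i
    exacts [⟨1, by simp⟩, ⟨0, by simp⟩])
  obtain ⟨r, s, hrs⟩ := hspan ![0, 1] (fun i => by
    fin_cases i
    exacts [⟨0, by simp⟩, ⟨1, by simp⟩])
  have hunit : (1 : ℝ) = (p * s - q * r) * planarDet u v := by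
    have h1 : planarDet ![1, 0] ![0, 1] = 1 := by simp [planarDet]
    rw [← h1, hpq, hrs]
    simp [planarDet]; ring
  obtain ⟨k, hk⟩ := hul.exists_planarDet_eq hvl
  rw [hk] at hunit ⊢
  have hunit' : k * (p * s - q * r) = 1 := by
    have : (1 : ℤ) = (p * s - q * r) * k := by exact_mod_cast hunit
    linarith
  rcases Int.eq_one_or_neg_one_of_mul_eq_one hunit' with h | h <;> simp [h]

section Basis

variable {e f : Fin 2 → ℝ}

/-- A lattice point in the open negative quadrant of a basis contained in `P` forces
`-e - f ∈ P`. -/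
lemma neg_sub_mem_of_neg_of_neg (hP : IsTerminalFano P) (h : IsLatticeBasis e f) (he : e ∈ P)
    (hf : f ∈ P) {p q : ℤ} (hp : p < 0) (hq : q < 0) (hw : (p : ℝ) • e + (q : ℝ) • f ∈ P) :
    -e - f ∈ P := by
  have aux : ∀ (e f : Fin 2 → ℝ), IsLatticeBasis e f → f ∈ P → ∀ p q : ℤ, p < 0 → q < 0 →
      (p : ℝ) • e + (q : ℝ) • f ∈ P → q ≤ p := by
    intro e f h hf p q hp hq hw
    by_contra! hlt
    obtain ⟨a, b, hae, haf, hbe, hbf, -, -⟩ := h.exists_coordinates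
    have hpR : (p : ℝ) < 0 := by exact_mod_cast hp
    have hqR : (q : ℝ) < 0 := by exact_mod_cast hq
    have hpq : (p : ℝ) + 1 ≤ q := by exact_mod_cast hlt
    have hpos : 0 < -(p : ℝ) := by linarith
    have hpne : (p : ℝ) ≠ 0 := by simpa using hpos.ne'
    rcases hP.eq_or_eq_of_combo hw hf (z := -e) (s := 1 / -(p : ℝ)) (t := -(q : ℝ) / -(p : ℝ))
      (by positivity) (div_nonneg (by linarith) hpos.le)
      (by rw [← add_div, div_le_one hpos]; linarith)
      (by match_scalars <;> field_simp <;> ring) h.1.neg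
      (fun h0 => by have := congrArg a h0; simp [hae] at this) with h' | h'
    · have := congrArg b h'
      simp [hbe, hbf] at this
      linarith
    · have := congrArg b h'
      simp [hbe, hbf] at this
  have hqp := aux e f h hf p q hp hq hw
  have hpq := aux f e h.swap he q p hq hp (by rwa [add_comm])
  obtain rfl : p = q := le_antisymm hpq hqp
  have hpR : (p : ℝ) ≤ -1 := by exact_mod_cast (by omega : p ≤ -1)
  have hpos : 0 < -(p : ℝ) := by linarith
  have hpne : (p : ℝ) ≠ 0 := by simpa using hpos.ne'
  have := hP.combo_mem hw hf (s := 1 / -(p : ℝ)) (t := 0) (by positivity) le_rfl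
    (by rw [add_zero, div_le_one hpos]; linarith)
  convert this using 1
  match_scalars <;> field_simp <;> simp

/-- A lattice point beyond the antidiagonal of a basis in `P`, but not in the open negative
quadrant, forces `-e ∈ P`. -/
lemma neg_mem_of_add_neg (hP : IsTerminalFano P) (h : IsLatticeBasis e f) (hf : f ∈ P)
    {p q : ℤ} (hq : 0 ≤ q) (hpq : p + q < 0) (hw : (p : ℝ) • e + (q : ℝ) • f ∈ P) :
    -e ∈ P := by
  obtain ⟨a, b, hae, haf, hbe, hbf, -, -⟩ := h.exists_coordinates
  have hpR : (p : ℝ) ≤ -1 := by exact_mod_cast (by omega : p ≤ -1)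
  have hpos : 0 < -(p : ℝ) := by linarith
  have hpne : (p : ℝ) ≠ 0 := by simpa using hpos.ne'
  rcases hq.eq_or_lt with rfl | hq0
  · have := hP.combo_mem hw hf (s := 1 / -(p : ℝ)) (t := 0) (by positivity) le_rfl
      (by rw [add_zero, div_le_one hpos]; linarith)
    convert this using 1
    match_scalars <;> field_simp <;> simp
  · exfalso
    have hqR : (1 : ℝ) ≤ q := by exact_mod_cast hq0
    have hpqR : (p : ℝ) + q < 0 := by exact_mod_cast hpq
    rcases hP.eq_or_eq_of_combo hw hf (z := -e + f) (s := 1 / -(p : ℝ))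
      (t := (-(p : ℝ) - q) / -(p : ℝ)) (by positivity) (div_nonneg (by linarith) hpos.le)
      (by rw [← add_div, div_le_one hpos]; linarith)
      (by match_scalars <;> field_simp <;> ring) (h.1.neg.add h.2.1)
      (fun h0 => by have := congrArg a h0; simp [hae, haf] at this) with h' | h'
    · have := congrArg a h'
      simp [hae, haf] at this
      linarith
    · have := congrArg a h'
      simp [hae, haf] at this

/-- A terminal Fano polygon containing `e`, `-e` and `f` contains a standard polygon. -/
lemma exists_subset_of_neg_mem (hP : IsTerminalFano P) (h : IsLatticeBasis e f) (he : e ∈ P)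
    (hf : f ∈ P) (hne : -e ∈ P) :
    ∃ e' f', IsLatticeBasis e' f' ∧ (squareHull e' f' ⊆ P ∨ triangleHull e' f' ⊆ P) := by
  obtain ⟨a, b, hae, haf, hbe, hbf, hx, hl⟩ := h.exists_coordinates
  obtain ⟨v, hvP, hvl, hv⟩ := hP.exists_neg b (w := f) (by simp [hbf])
  obtain ⟨⟨p, hp⟩, q, hq⟩ := hl v hvl
  rw [hq] at hv
  have hq0 : q < 0 := by exact_mod_cast hv
  rw [hx v, hp, hq] at hvP
  have htri : ∀ e' : Fin 2 → ℝ, e' ∈ P → -e' - f ∈ P → triangleHull e' f ⊆ P := by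
    intro e' he' hneg
    refine convexHull_min ?_ hP.convex
    rintro x (rfl | rfl | rfl) <;> assumption
  rcases lt_trichotomy p 0 with hp0 | rfl | hp0
  · exact ⟨e, f, h, Or.inr (htri e he (hP.neg_sub_mem_of_neg_of_neg h he hf hp0 hq0 hvP))⟩
  · refine ⟨e, f, h, Or.inl (convexHull_min ?_ hP.convex)⟩
    have hnf : -f ∈ P := hP.neg_mem_of_add_neg h.swap he le_rfl (p := q) (by omega)
      (by rwa [add_comm])
    rintro x (rfl | rfl | rfl | rfl) <;> assumption
  · refine ⟨-e, f, h.neg_left, Or.inr (htri (-e) hne ?_)⟩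
    refine hP.neg_sub_mem_of_neg_of_neg h.neg_left hne hf (p := -p) (by omega) hq0 ?_
    simpa using hvP

end Basis

lemma exists_standard_subset (hP : IsTerminalFano P) :
    ∃ e f, IsLatticeBasis e f ∧ (squareHull e f ⊆ P ∨ triangleHull e f ⊆ P) := by
  obtain ⟨e, he, f, hf, h⟩ := hP.exists_isLatticeBasis
  obtain ⟨a, b, hae, haf, hbe, hbf, hx, hl⟩ := h.exists_coordinates
  obtain ⟨v, hvP, hvl, hv⟩ := hP.exists_neg (a + b) (w := e) (by simp [hae, hbe])
  obtain ⟨⟨p, hp⟩, q, hq⟩ := hl v hvl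
  rw [LinearMap.add_apply, hp, hq] at hv
  have hpq : p + q < 0 := by exact_mod_cast hv
  rw [hx v, hp, hq] at hvP
  rcases le_or_gt 0 q with hq0 | hq0
  · exact hP.exists_subset_of_neg_mem h he hf (hP.neg_mem_of_add_neg h hf hq0 hpq hvP)
  rcases le_or_gt 0 p with hp0 | hp0
  · exact hP.exists_subset_of_neg_mem h.swap hf he
      (hP.neg_mem_of_add_neg h.swap he (p := q) hp0 (by omega) (by rwa [add_comm]))
  · refine ⟨e, f, h, Or.inr (convexHull_min ?_ hP.convex)⟩
    have := hP.neg_sub_mem_of_neg_of_neg h he hf hp0 hq0 hvP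
    rintro x (rfl | rfl | rfl) <;> assumption

lemma fanoConnected_standard (hP : IsTerminalFano P) :
    FanoConnected (squareHull (realColumn 1 0) (realColumn 1 1)) P := by
  obtain ⟨e, f, h, hsub | hsub⟩ := hP.exists_standard_subset
  · exact h.fanoConnected_standard.trans
      (FanoConnected.of_subset h.isTerminalFano_squareHull hP hsub)
  · exact (h.fanoConnected_standard.trans h.fanoConnected_triangle.symm).trans
      (FanoConnected.of_subset h.isTerminalFano_triangleHull hP hsub)

end IsTerminalFano

/-- Any two terminal Fano polygons in `ℤ²` (not merely up to unimodular
equivalence) are connected by a finite chain of terminal Fano polygons in which each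
consecutive pair is related by inclusion. -/
theorem terminal_fano_connected (P Q : Set (Fin 2 → ℝ))
    (hP : IsTerminalFano P) (hQ : IsTerminalFano Q) :
    ∃ (k : ℕ) (c : ℕ → Set (Fin 2 → ℝ)), c 0 = P ∧ c k = Q ∧
      (∀ i ≤ k, IsTerminalFano (c i)) ∧
      ∀ i < k, c i ⊆ c (i+1) ∨ c (i+1) ⊆ c i := by
  exact (hP.fanoConnected_standard.symm.trans hQ.fanoConnected_standard).exists_chain hQ
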